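/- In the nonlinear setting with standing conditions (N1)–(N5): for every ε > 0 there exists n_0 ∈ ℕ such that for every n > n_0 and every r ∈ (0,1], one has m_n([0,r])/r^{h_n} ≤ 1 + ε. -/

import Mathlib

open Set Filter MeasureTheory Topology

noncomputable section

/-- Composition `g_{i₁} ∘ g_{i₂} ∘ ⋯ ∘ g_{i_l}` along a finite word. -/
def wordComp (g : ℕ → ℝ → ℝ) : List ℕ → ℝ → ℝ
  | [] => id
  | k :: w => g k ∘ wordComp g w

/-- The limit set `J_n` of the IFS `S_n = {g_1, …, g_n}`. -/
def limitSet (g : ℕ → ℝ → ℝ) (n : ℕ) : Set ℝ :=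
  ⋂ l : ℕ, ⋃ w ∈ {w : List ℕ | w.length = l + 1 ∧ ∀ i ∈ w, 1 ≤ i ∧ i ≤ n},
    wordComp g w '' Set.Icc (0 : ℝ) 1

/-- The distortion `κ(g) = sup_{x,y ∈ [0,1]} |g′(y)|/|g′(x)|` of a map with derivative `f'`. -/
def distortion (f' : ℝ → ℝ) : ℝ :=
  ⨆ x ∈ Set.Icc (0 : ℝ) 1, ⨆ y ∈ Set.Icc (0 : ℝ) 1, |f' y| / |f' x|

/-- The nonlinear setting of the paper: a strictly decreasing sequence `b_k → 0` with `b_0 = 1`,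
    decreasing `C²` diffeomorphisms `g_k : [0,1] → [b_k, b_{k-1}]` (with first and second
    derivatives `g'` and `g''`), the Hausdorff dimensions `h_n` of the limit sets `J_n`, and
    the standing conditions (N1)–(N5). -/
structure NonlinearIFS where
  b : ℕ → ℝ
  g : ℕ → ℝ → ℝ
  g' : ℕ → ℝ → ℝ
  g'' : ℕ → ℝ → ℝ
  h : ℕ → ℝ
  b_zero : b 0 = 1
  b_anti : StrictAnti b
  b_lim : Filter.Tendsto b Filter.atTop (nhds 0)
  g_image : ∀ k, 1 ≤ k → g k '' Set.Icc (0 : ℝ) 1 = Set.Icc (b k) (b (k - 1))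
  g_anti : ∀ k, 1 ≤ k → StrictAntiOn (g k) (Set.Icc (0 : ℝ) 1)
  g_zero : ∀ k, 1 ≤ k → g k 0 = b (k - 1)
  g_one : ∀ k, 1 ≤ k → g k 1 = b k
  deriv1 : ∀ k, 1 ≤ k → ∀ x ∈ Set.Icc (0 : ℝ) 1, HasDerivAt (g k) (g' k x) x
  deriv2 : ∀ k, 1 ≤ k → ∀ x ∈ Set.Icc (0 : ℝ) 1, HasDerivAt (g' k) (g'' k x) x
  deriv_ne : ∀ k, 1 ≤ k → ∀ x ∈ Set.Icc (0 : ℝ) 1, g' k x ≠ 0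
  h_dim : ∀ n, 1 ≤ n → dimH (limitSet g n) = ENNReal.ofReal (h n)
  N1 : Filter.Tendsto (fun n : ℕ => (1 - h n) * Real.log n) Filter.atTop (nhds 0)
  N2 : Filter.Tendsto (fun n : ℕ => ⨆ k ∈ Set.Ici n, b k / b (k + 1)) Filter.atTop (nhds 1)
  N3 : ∃ c : ℝ, 0 < c ∧ ∀ n, 1 ≤ n → ∀ x ∈ Set.Icc (0 : ℝ) 1, |g'' n x / g' n x| < c
  N4 : Filter.Tendsto (fun n : ℕ => distortion (g' n)) Filter.atTop (nhds 1)
  N5 : ∃ α : ℝ, α < 1 ∧ ∀ n, 1 ≤ n → ∀ x ∈ Set.Icc (0 : ℝ) 1, |g' n x| < α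

/-- The normalized Hausdorff measure `m_n(A) = H_{h_n}(A ∩ J_n)/H_{h_n}(J_n)`. -/
def normMeas (S : NonlinearIFS) (n : ℕ) (A : Set ℝ) : ENNReal :=
  μH[S.h n] (A ∩ limitSet S.g n) / μH[S.h n] (limitSet S.g n)

/-!
The transfer operator `L ψ = ∑ k ≤ n, ψ (g k ·) * |deriv (g k) ·| ^ h n` relates two measures on
`[0, 1]`. The normalized Hausdorff measure `m_n` satisfies `∫ ψ dm_n ≤ ∫ L ψ dm_n` for `ψ ≥ 0`, by
the change of variables inequality for Hausdorff measure on each branch. Lebesgue measure is almost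
preserved: by weighted AM-GM, `∫ L ψ ≤ (1 + o(1)) ∫ ψ`, because `n ^ (1 - h n) → 1`. Moreover, since
the branches contract and have bounded distortion, `L` strictly contracts the cone of positive
functions with `C`-Lipschitz logarithm, for `C` large. Comparing the two measures on this cone
gives `∫ ψ dm_n ≤ (1 + o(1)) ∫ ψ`, uniformly over the cone.

If `r` is bounded away from `0`, the test function `exp (-(N * max 0 (x - r)))` bounds
`m_n [0, r]`. If `b (j + 1) ≤ r < b j` with `j` large, only the branches `k > j` meet `[0, r]`, so
`m_n [0, r]` is at most the `m_n`-integral of `∑ j < k ≤ n, |deriv (g k) ·| ^ h n`. This sum lies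
in the cone and its Lebesgue integral is at most `n ^ (1 - h n) * b j ^ h n`; finally
`b j / b (j + 1) → 1`.
-/

section HausdorffMeasure

lemma setLIntegral_image_le {X Y : Type*} [MeasurableSpace X] [MeasurableSpace Y]
    {μ : Measure Y} {ν : Measure X} {f : X → Y} {A : Set X} (hf : AEMeasurable f (ν.restrict A))
    (hμν : ∀ B ⊆ A, μ (f '' B) ≤ ν B) (Ψ : Y → ENNReal) :
    ∫⁻ y in f '' A, Ψ y ∂μ ≤ ∫⁻ x in A, Ψ (f x) ∂ν := by
  have restrict_le_map : μ.restrict (f '' A) ≤ (ν.restrict A).map f := by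
    refine Measure.le_iff.2 fun B hB => ?_
    calc μ.restrict (f '' A) B = μ (f '' (A ∩ f ⁻¹' B)) := by
          rw [Measure.restrict_apply hB, image_inter_preimage, inter_comm]
      _ ≤ ν (f ⁻¹' B ∩ A) := by
          rw [inter_comm (f ⁻¹' B)]
          exact hμν _ inter_subset_left
      _ ≤ ν.restrict A (f ⁻¹' B) := Measure.le_restrict_apply _ _
      _ ≤ (ν.restrict A).map f B := Measure.le_map_apply hf B
  exact (lintegral_mono' restrict_le_map le_rfl).trans (lintegral_map_le Ψ f)

lemma exists_forall_dist_lt_nnnorm_le_mul {X E : Type*} [PseudoMetricSpace X]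
    [NormedAddCommGroup E] {K : Set X} {f : X → E} (hK : IsCompact K)
    (hf : ContinuousOn (fun x => ‖f x‖) K) (hne : ∀ x ∈ K, f x ≠ 0) {ρ : NNReal} (hρ : 1 < ρ) :
    ∃ δ > 0, ∀ x ∈ K, ∀ y ∈ K, dist x y < δ → ‖f x‖₊ ≤ ρ * ‖f y‖₊ := by
  have hlog : ContinuousOn (fun x => Real.log ‖f x‖) K :=
    hf.log fun x hx => norm_ne_zero_iff.2 (hne x hx)
  obtain ⟨δ, hδ, hlogδ⟩ := Metric.uniformContinuousOn_iff.1
    (hK.uniformContinuousOn_of_continuous hlog) (Real.log ρ) (Real.log_pos (by exact_mod_cast hρ))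
  refine ⟨δ, hδ, fun x hx y hy hxy => ?_⟩
  have hy0 : 0 < ‖f y‖ := norm_pos_iff.2 (hne y hy)
  have hρ0 : (0 : ℝ) < ρ := by exact_mod_cast zero_lt_one.trans hρ
  have hlog_le : Real.log ‖f x‖ ≤ Real.log (ρ * ‖f y‖) := by
    rw [Real.log_mul hρ0.ne' hy0.ne']
    linarith [(abs_lt.1 (hlogδ x hx y hy hxy)).2]
  exact_mod_cast (Real.log_le_log_iff (norm_pos_iff.2 (hne x hx)) (by positivity)).1 hlog_le

variable {f : ℝ → ℝ} {h : ℝ}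

lemma measurable_enorm_deriv_rpow (f : ℝ → ℝ) (h : ℝ) : Measurable fun x => ‖deriv f x‖ₑ ^ h :=
  (measurable_deriv f).enorm.pow_const h

lemma hausdorffMeasure_image_le_mul_lintegral_enorm_deriv (hh : 0 ≤ h) {s A : Set ℝ}
    (hs : Convex ℝ s) (hf : ∀ x ∈ s, DifferentiableAt ℝ f x) {ρ : NNReal}
    (hρ : ∀ x ∈ s, ∀ y ∈ s, ‖deriv f x‖₊ ≤ ρ * ‖deriv f y‖₊) (hA : A ⊆ s) :
    μH[h] (f '' A) ≤ ((ρ ^ 2 : NNReal) : ENNReal) ^ h * ∫⁻ x in A, ‖deriv f x‖ₑ ^ h ∂μH[h] := by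
  rcases A.eq_empty_or_nonempty with rfl | ⟨x₀, hx₀⟩
  · simp
  have hlip : LipschitzOnWith (ρ * ‖deriv f x₀‖₊) f A :=
    (hs.lipschitzOnWith_of_nnnorm_deriv_le hf fun x hx => hρ x hx x₀ (hA hx₀)).mono hA
  have hder_le : ∀ x ∈ A, ((ρ * ‖deriv f x₀‖₊ : NNReal) : ENNReal) ^ h ≤
      ((ρ ^ 2 : NNReal) : ENNReal) ^ h * ‖deriv f x‖ₑ ^ h := by
    intro x hx
    rw [← ENNReal.mul_rpow_of_nonneg _ _ hh, enorm_eq_nnnorm, ← ENNReal.coe_mul]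
    refine ENNReal.rpow_le_rpow (ENNReal.coe_le_coe.2 ?_) hh
    rw [sq, mul_assoc]
    exact mul_le_mul_right (hρ x₀ (hA hx₀) x (hA hx)) ρ
  have hmeas := measurable_enorm_deriv_rpow f h
  calc μH[h] (f '' A) ≤ ((ρ * ‖deriv f x₀‖₊ : NNReal) : ENNReal) ^ h * μH[h] A :=
        hlip.hausdorffMeasure_image_le hh
    _ = ∫⁻ _ in A, ((ρ * ‖deriv f x₀‖₊ : NNReal) : ENNReal) ^ h ∂μH[h] :=
        (setLIntegral_const _ _).symm
    _ ≤ ∫⁻ x in A, ((ρ ^ 2 : NNReal) : ENNReal) ^ h * ‖deriv f x‖ₑ ^ h ∂μH[h] :=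
        setLIntegral_mono (hmeas.const_mul _) hder_le
    _ = _ := lintegral_const_mul _ hmeas

variable {a b : ℝ} (hf : ∀ x ∈ Icc a b, DifferentiableAt ℝ f x)
  (hf' : ContinuousOn (fun x => ‖deriv f x‖) (Icc a b)) (hne : ∀ x ∈ Icc a b, deriv f x ≠ 0)
include hf hf' hne

lemma hausdorffMeasure_image_le_sq_rpow_mul_lintegral_enorm_deriv (hh : 0 ≤ h) {A : Set ℝ}
    (hA : A ⊆ Icc a b) {ρ : NNReal} (hρ : 1 < ρ) :
    μH[h] (f '' A) ≤ ((ρ ^ 2 : NNReal) : ENNReal) ^ h * ∫⁻ x in A, ‖deriv f x‖ₑ ^ h ∂μH[h] := by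
  set w : ℝ → ENNReal := fun x => ‖deriv f x‖ₑ ^ h
  obtain ⟨δ, hδ, hδρ⟩ := exists_forall_dist_lt_nnnorm_le_mul isCompact_Icc hf' hne hρ
  let P : ℤ → Set ℝ := fun i => Ico (i • δ) ((i + 1) • δ)
  have hAP : A = ⋃ i, A ∩ P i := by
    rw [← inter_iUnion, iUnion_Ico_zsmul hδ, inter_univ]
  have hdist : ∀ i, ∀ x ∈ P i, ∀ y ∈ P i, dist x y < δ := by
    rintro i x ⟨hx₁, hx₂⟩ y ⟨hy₁, hy₂⟩
    rw [add_zsmul, one_zsmul] at hx₂ hy₂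
    rw [Real.dist_eq, abs_lt]
    constructor <;> linarith
  calc μH[h] (f '' A) = μH[h] (⋃ i, f '' (A ∩ P i)) := by rw [← image_iUnion, ← hAP]
    _ ≤ ∑' i, μH[h] (f '' (A ∩ P i)) := measure_iUnion_le _
    _ ≤ ∑' i, ((ρ ^ 2 : NNReal) : ENNReal) ^ h * ∫⁻ x in A ∩ P i, w x ∂μH[h] :=
        ENNReal.tsum_le_tsum fun i => hausdorffMeasure_image_le_mul_lintegral_enorm_deriv hh
          ((convex_Icc a b).inter (convex_Ico _ _)) (fun x hx => hf x hx.1)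
          (fun x hx y hy => hδρ x hx.1 y hy.1 (hdist i x hx.2 y hy.2))
          (inter_subset_inter_left _ hA)
    _ = ((ρ ^ 2 : NNReal) : ENNReal) ^ h * ∫⁻ x in A, w x ∂μH[h] := by
        rw [ENNReal.tsum_mul_left]
        conv_rhs => rw [← Measure.restrict_univ (μ := (μH[h] : Measure ℝ).restrict A),
          ← iUnion_Ico_zsmul hδ,
          lintegral_iUnion (fun _ => measurableSet_Ico) (pairwise_disjoint_Ico_zsmul δ)]
        simp_rw [Measure.restrict_restrict measurableSet_Ico, inter_comm _ A, P]

lemma hausdorffMeasure_image_le_lintegral_enorm_deriv (hh : 0 ≤ h) {A : Set ℝ}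
    (hA : A ⊆ Icc a b) : μH[h] (f '' A) ≤ ∫⁻ x in A, ‖deriv f x‖ₑ ^ h ∂μH[h] := by
  set I := ∫⁻ x in A, ‖deriv f x‖ₑ ^ h ∂μH[h]
  have hlim : Tendsto (fun ρ : NNReal => ((ρ ^ 2 : NNReal) : ENNReal) ^ h * I) (𝓝[>] 1) (𝓝 I) := by
    have hcont : Continuous fun ρ : NNReal => ((ρ ^ 2 : NNReal) : ENNReal) ^ h :=
      ENNReal.continuous_rpow_const.comp (ENNReal.continuous_coe.comp (continuous_pow 2))
    have := ENNReal.Tendsto.mul_const (b := I) (hcont.tendsto 1) (Or.inl (by simp))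
    simpa using this.mono_left nhdsWithin_le_nhds
  exact ge_of_tendsto hlim <| eventually_mem_nhdsWithin.mono fun ρ hρ =>
    hausdorffMeasure_image_le_sq_rpow_mul_lintegral_enorm_deriv hf hf' hne hh hA hρ

lemma setLIntegral_hausdorffMeasure_image_le (hh : 0 ≤ h) {A : Set ℝ} (hA : MeasurableSet A)
    (hAab : A ⊆ Icc a b) (Ψ : ℝ → ENNReal) :
    ∫⁻ y in f '' A, Ψ y ∂μH[h] ≤ ∫⁻ x in A, ‖deriv f x‖ₑ ^ h * Ψ (f x) ∂μH[h] := by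
  set w : ℝ → ENNReal := fun x => ‖deriv f x‖ₑ ^ h
  have hfA : ContinuousOn f A := fun x hx => (hf x (hAab hx)).continuousAt.continuousWithinAt
  calc ∫⁻ y in f '' A, Ψ y ∂μH[h] ≤ ∫⁻ x in A, Ψ (f x) ∂(μH[h]).withDensity w :=
        setLIntegral_image_le (hfA.aemeasurable hA)
          (fun B hB => (hausdorffMeasure_image_le_lintegral_enorm_deriv hf hf' hne hh
            (hB.trans hAab)).trans (withDensity_apply_le _ _)) Ψ
    _ ≤ ∫⁻ x in A, w x * Ψ (f x) ∂μH[h] := by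
        rw [restrict_withDensity hA]
        exact lintegral_withDensity_le_lintegral_mul _ (measurable_enorm_deriv_rpow f h) _

end HausdorffMeasure

/-- `ψ` is positive on `s` and `Real.log ∘ ψ` is `C`-Lipschitz there, written multiplicatively.
For fixed `C` these functions form a convex cone, on which the transfer operators act. -/
def LogLipschitzOn {X : Type*} [PseudoMetricSpace X] (C : ℝ) (ψ : X → ℝ) (s : Set X) : Prop :=
  (∀ x ∈ s, 0 < ψ x) ∧ ∀ x ∈ s, ∀ y ∈ s, ψ x ≤ Real.exp (C * dist x y) * ψ y

namespace LogLipschitzOn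

section PseudoMetricSpace

variable {X Y ι : Type*} [PseudoMetricSpace X] [PseudoMetricSpace Y] {s : Set X} {t : Set Y}
  {C C' : ℝ} {ψ φ : X → ℝ}

lemma one (hC : 0 ≤ C) : LogLipschitzOn C (fun _ => 1) s :=
  ⟨fun _ _ => one_pos, fun x _ y _ => by simpa using mul_nonneg hC dist_nonneg⟩

lemma exp_of_lipschitzOn {u : X → ℝ} (hu : ∀ x ∈ s, ∀ y ∈ s, u x - u y ≤ C * dist x y) :
    LogLipschitzOn C (fun x => Real.exp (u x)) s := by
  refine ⟨fun x _ => Real.exp_pos _, fun x hx y hy => ?_⟩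
  rw [← Real.exp_add, Real.exp_le_exp]
  linarith [hu x hx y hy]

lemma mono (hψ : LogLipschitzOn C ψ s) (hCC' : C ≤ C') : LogLipschitzOn C' ψ s :=
  ⟨hψ.1, fun x hx y hy => (hψ.2 x hx y hy).trans <| by have := hψ.1 y hy; gcongr⟩

lemma congr (hψ : LogLipschitzOn C ψ s) (h : EqOn φ ψ s) : LogLipschitzOn C φ s :=
  ⟨fun x hx => h hx ▸ hψ.1 x hx, fun x hx y hy => by rw [h hx, h hy]; exact hψ.2 x hx y hy⟩

lemma continuousOn (hψ : LogLipschitzOn C ψ s) : ContinuousOn ψ s := by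
  intro x hx
  have hlim : ∀ c : ℝ, Tendsto (fun y => Real.exp (c * dist x y) * ψ x) (𝓝[s] x) (𝓝 (ψ x)) := by
    intro c
    have hcont : Continuous fun y => Real.exp (c * dist x y) * ψ x := by fun_prop
    simpa using (hcont.tendsto x).mono_left nhdsWithin_le_nhds
  refine tendsto_of_tendsto_of_tendsto_of_le_of_le' (hlim (-C)) (hlim C) ?_ ?_ <;>
    filter_upwards [self_mem_nhdsWithin] with y hy
  · rw [neg_mul, Real.exp_neg, inv_mul_le_iff₀ (Real.exp_pos _)]
    exact hψ.2 x hx y hy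
  · rw [dist_comm]
    exact hψ.2 y hy x hx

lemma mul (hψ : LogLipschitzOn C ψ s) (hφ : LogLipschitzOn C' φ s) :
    LogLipschitzOn (C + C') (fun x => ψ x * φ x) s := by
  refine ⟨fun x hx => mul_pos (hψ.1 x hx) (hφ.1 x hx), fun x hx y hy => ?_⟩
  calc ψ x * φ x
      ≤ Real.exp (C * dist x y) * ψ y * (Real.exp (C' * dist x y) * φ y) :=
        mul_le_mul (hψ.2 x hx y hy) (hφ.2 x hx y hy) (hφ.1 x hx).le
          (mul_nonneg (Real.exp_pos _).le (hψ.1 y hy).le)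
    _ = Real.exp ((C + C') * dist x y) * (ψ y * φ y) := by
        rw [add_mul, Real.exp_add]
        ring

lemma rpow (hψ : LogLipschitzOn C ψ s) {h : ℝ} (hh : 0 ≤ h) :
    LogLipschitzOn (h * C) (fun x => ψ x ^ h) s := by
  refine ⟨fun x hx => Real.rpow_pos_of_pos (hψ.1 x hx) h, fun x hx y hy => ?_⟩
  calc ψ x ^ h ≤ (Real.exp (C * dist x y) * ψ y) ^ h :=
        Real.rpow_le_rpow (hψ.1 x hx).le (hψ.2 x hx y hy) hh
    _ = Real.exp (h * C * dist x y) * ψ y ^ h := by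
        rw [Real.mul_rpow (Real.exp_pos _).le (hψ.1 y hy).le, ← Real.exp_mul]
        ring_nf

lemma comp {ψ : Y → ℝ} (hψ : LogLipschitzOn C ψ t) (hC : 0 ≤ C) {f : X → Y} {α : ℝ}
    (hf : MapsTo f s t) (hlip : ∀ x ∈ s, ∀ y ∈ s, dist (f x) (f y) ≤ α * dist x y) :
    LogLipschitzOn (C * α) (fun x => ψ (f x)) s := by
  refine ⟨fun x hx => hψ.1 _ (hf hx), fun x hx y hy =>
    (hψ.2 _ (hf hx) _ (hf hy)).trans ?_⟩
  have := hψ.1 _ (hf hy)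
  rw [mul_assoc C]
  gcongr
  exact hlip x hx y hy

lemma sum {F : ι → X → ℝ} {I : Finset ι} (hI : I.Nonempty)
    (hF : ∀ i ∈ I, LogLipschitzOn C (F i) s) : LogLipschitzOn C (fun x => ∑ i ∈ I, F i x) s := by
  refine ⟨fun x hx => Finset.sum_pos (fun i hi => (hF i hi).1 x hx) hI, fun x hx y hy => ?_⟩
  rw [Finset.mul_sum]
  exact Finset.sum_le_sum fun i hi => (hF i hi).2 x hx y hy

/-- Since `exp` is convex, `exp ((1 - σ) t) ≤ (1 - σ) exp t + σ`; so a function with the better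
constant `(1 - σ) * C` has room to lose a constant of relative size `σ`. -/
lemma sub_const {σ a : ℝ} (hC : 0 ≤ C) (hσ₀ : 0 ≤ σ) (hσ₁ : σ < 1)
    (hψ : LogLipschitzOn ((1 - σ) * C) ψ s) (ha : ∀ x ∈ s, a ≤ σ * ψ x) :
    LogLipschitzOn C (fun x => ψ x - a) s := by
  refine ⟨fun x hx => ?_, fun x hx y hy => ?_⟩
  · nlinarith [hψ.1 x hx, ha x hx]
  set t := C * dist x y
  have ht : 0 ≤ t := mul_nonneg hC dist_nonneg
  have hconv : Real.exp ((1 - σ) * t) ≤ (1 - σ) * Real.exp t + σ := by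
    simpa using convexOn_exp.2 (mem_univ t) (mem_univ (0 : ℝ)) (sub_nonneg.2 hσ₁.le) hσ₀ (by ring)
  calc ψ x - a ≤ Real.exp ((1 - σ) * t) * ψ y - a := by
        rw [← mul_assoc (1 - σ)]
        exact sub_le_sub_right (hψ.2 x hx y hy) a
    _ ≤ ((1 - σ) * Real.exp t + σ) * ψ y - a := by
        have := hψ.1 y hy
        gcongr
    _ ≤ Real.exp t * (ψ y - a) := by
        nlinarith [mul_nonneg (sub_nonneg.2 (ha y hy)) (sub_nonneg.2 (Real.one_le_exp ht))]

lemma le_exp_diam_mul (hψ : LogLipschitzOn C ψ s) (hC : 0 ≤ C) (hs : Bornology.IsBounded s)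
    {x y : X} (hx : x ∈ s) (hy : y ∈ s) : ψ x ≤ Real.exp (C * Metric.diam s) * ψ y :=
  (hψ.2 x hx y hy).trans <| by
    have := hψ.1 y hy
    gcongr
    exact Metric.dist_le_diam_of_mem hs hx hy

end PseudoMetricSpace

section Integral

variable {X : Type*} [MetricSpace X] [MeasurableSpace X] [OpensMeasurableSpace X] {K : Set X}
  {C : ℝ} {ψ : X → ℝ} {ν : Measure X}

lemma integrable [IsFiniteMeasure ν] (hψ : LogLipschitzOn C ψ K) (hK : IsCompact K)
    (hν : ∀ᵐ x ∂ν, x ∈ K) : Integrable ψ ν := by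
  rw [← Measure.restrict_eq_self_of_ae_mem hν]
  exact hψ.continuousOn.integrableOn_compact hK

lemma integral_le_exp_mul [IsZeroOrProbabilityMeasure ν] (hψ : LogLipschitzOn C ψ K)
    (hC : 0 ≤ C) (hK : IsCompact K) (hν : ∀ᵐ x ∂ν, x ∈ K) {y : X} (hy : y ∈ K) :
    ∫ x, ψ x ∂ν ≤ Real.exp (C * Metric.diam K) * ψ y := by
  set B := Real.exp (C * Metric.diam K) * ψ y
  have hB : 0 ≤ B := mul_nonneg (Real.exp_pos _).le (hψ.1 y hy).le
  calc ∫ x, ψ x ∂ν ≤ ∫ _, B ∂ν :=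
        integral_mono_ae (hψ.integrable hK hν) (integrable_const B) <|
          hν.mono fun x hx => hψ.le_exp_diam_mul hC hK.isBounded hx hy
    _ ≤ B := by
        rw [integral_const, smul_eq_mul]
        exact mul_le_of_le_one_left hB measureReal_le_one

lemma le_exp_mul_integral [IsProbabilityMeasure ν] (hψ : LogLipschitzOn C ψ K)
    (hC : 0 ≤ C) (hK : IsCompact K) (hν : ∀ᵐ x ∂ν, x ∈ K) {y : X} (hy : y ∈ K) :
    ψ y ≤ Real.exp (C * Metric.diam K) * ∫ x, ψ x ∂ν := by
  calc ψ y = ∫ _, ψ y ∂ν := by simp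
    _ ≤ ∫ x, Real.exp (C * Metric.diam K) * ψ x ∂ν :=
        integral_mono_ae (integrable_const _) ((hψ.integrable hK hν).const_mul _) <|
          hν.mono fun x hx => hψ.le_exp_diam_mul hC hK.isBounded hy hx
    _ = _ := integral_const_mul _ _

lemma integral_pos [IsProbabilityMeasure ν] (hψ : LogLipschitzOn C ψ K) (hC : 0 ≤ C)
    (hK : IsCompact K) (hν : ∀ᵐ x ∂ν, x ∈ K) : 0 < ∫ x, ψ x ∂ν := by
  obtain ⟨y, hy⟩ := hν.exists
  exact pos_of_mul_pos_right ((hψ.1 y hy).trans_le (hψ.le_exp_mul_integral hC hK hν hy))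
    (Real.exp_pos _).le

end Integral

end LogLipschitzOn

section ConeContraction

variable {X : Type*} [MetricSpace X] [MeasurableSpace X] [OpensMeasurableSpace X] {K : Set X}
  {C σ θ η : ℝ} {L : (X → ℝ) → X → ℝ} {μ ν : Measure X} [IsZeroOrProbabilityMeasure μ]
  [IsProbabilityMeasure ν] (hK : IsCompact K) (hμ : ∀ᵐ x ∂μ, x ∈ K) (hν : ∀ᵐ x ∂ν, x ∈ K)
  (hC : 0 ≤ C) (hσ₀ : 0 ≤ σ) (hσ₁ : σ < 1) (hθ : 0 ≤ θ)
  (hcone : ∀ ψ, LogLipschitzOn C ψ K → LogLipschitzOn ((1 - σ) * C) (L ψ) K)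
  (hlower : ∀ ψ, LogLipschitzOn C ψ K → ∀ x ∈ K, θ * ∫ y, ψ y ∂ν ≤ σ * L ψ x)
  (hupper : ∀ ψ, LogLipschitzOn C ψ K → ∫ x, L ψ x ∂ν ≤ (1 + η) * ∫ x, ψ x ∂ν)
  (hsub : ∀ ψ, LogLipschitzOn C ψ K → ∫ x, ψ x ∂μ ≤ ∫ x, L ψ x ∂μ)

include hK hμ hν hC hσ₀ hσ₁ hθ hcone hlower hupper hsub

/-- The bound `M` is applied to `L ψ - θ * ∫ ψ ∂ν`, which stays in the cone: the part of the mass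
that `L` spreads uniformly is compared with factor `1` instead of `M`. -/
lemma integral_le_mul_integral_of_forall_integral_le {M : ℝ} (hM₀ : 0 ≤ M)
    (hM : ∀ φ, LogLipschitzOn C φ K → ∫ x, φ x ∂μ ≤ M * ∫ x, φ x ∂ν) {ψ : X → ℝ}
    (hψ : LogLipschitzOn C ψ K) :
    ∫ x, ψ x ∂μ ≤ (θ + M * (1 + η - θ)) * ∫ x, ψ x ∂ν := by
  set a := θ * ∫ x, ψ x ∂ν
  have ha : 0 ≤ a := mul_nonneg hθ (hψ.integral_pos hC hK hν).le
  have hsub_const : LogLipschitzOn C (fun x => L ψ x - a) K :=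
    (hcone ψ hψ).sub_const hC hσ₀ hσ₁ (hlower ψ hψ)
  calc ∫ x, ψ x ∂μ ≤ ∫ x, L ψ x ∂μ := hsub ψ hψ
    _ = ∫ x, (L ψ x - a) ∂μ + μ.real univ * a := by
        rw [integral_sub ((hcone ψ hψ).integrable hK hμ) (integrable_const a), integral_const,
          smul_eq_mul, sub_add_cancel]
    _ ≤ M * ∫ x, (L ψ x - a) ∂ν + a := by
        gcongr
        · exact hM _ hsub_const
        · exact mul_le_of_le_one_left ha measureReal_le_one
    _ = M * (∫ x, L ψ x ∂ν - a) + a := by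
        rw [integral_sub ((hcone ψ hψ).integrable hK hν) (integrable_const a)]
        simp
    _ ≤ M * ((1 + η) * ∫ x, ψ x ∂ν - a) + a := by
        gcongr
        exact hupper ψ hψ
    _ = _ := by ring

theorem integral_le_mul_integral_of_cone_contraction (hηθ : η < θ) {ψ : X → ℝ}
    (hψ : LogLipschitzOn C ψ K) :
    ∫ x, ψ x ∂μ ≤ θ / (θ - η) * ∫ x, ψ x ∂ν := by
  let ratios : Set ℝ := {q | ∃ φ, LogLipschitzOn C φ K ∧ q = (∫ x, φ x ∂μ) / ∫ x, φ x ∂ν}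
  have hpos : ∀ φ, LogLipschitzOn C φ K → 0 < ∫ x, φ x ∂ν := fun φ hφ => hφ.integral_pos hC hK hν
  have hbdd : BddAbove ratios := by
    obtain ⟨y, hy⟩ := hν.exists
    refine ⟨Real.exp (C * Metric.diam K) * Real.exp (C * Metric.diam K), ?_⟩
    rintro _ ⟨φ, hφ, rfl⟩
    rw [div_le_iff₀ (hpos φ hφ), mul_assoc]
    exact (hφ.integral_le_exp_mul hC hK hμ hy).trans <|
      mul_le_mul_of_nonneg_left (hφ.le_exp_mul_integral hC hK hν hy) (Real.exp_pos _).le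
  have hratio : ∀ φ, LogLipschitzOn C φ K → ∫ x, φ x ∂μ ≤ sSup ratios * ∫ x, φ x ∂ν :=
    fun φ hφ => (div_le_iff₀ (hpos φ hφ)).1 (le_csSup hbdd ⟨φ, hφ, rfl⟩)
  have hnonneg : 0 ≤ sSup ratios := by
    refine Real.sSup_nonneg ?_
    rintro _ ⟨φ, hφ, rfl⟩
    exact div_nonneg (integral_nonneg_of_ae (hμ.mono fun x hx => (hφ.1 x hx).le)) (hpos φ hφ).le
  have hself : sSup ratios ≤ θ + sSup ratios * (1 + η - θ) := by
    refine csSup_le ⟨_, ψ, hψ, rfl⟩ ?_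
    rintro _ ⟨φ, hφ, rfl⟩
    exact (div_le_iff₀ (hpos φ hφ)).2 <| integral_le_mul_integral_of_forall_integral_le hK hμ hν
      hC hσ₀ hσ₁ hθ hcone hlower hupper hsub hnonneg hratio hφ
  refine (hratio ψ hψ).trans (mul_le_mul_of_nonneg_right ?_ (hpos ψ hψ).le)
  rw [le_div_iff₀ (sub_pos.2 hηθ)]
  linarith

end ConeContraction

section LimitSet

/-- The union of the images of `[0, 1]` under all words of length `l` in `g 1, …, g n`;
by definition `limitSet g n` is `⋂ l, cylinderUnion g n (l + 1)`. -/
def cylinderUnion (g : ℕ → ℝ → ℝ) (n l : ℕ) : Set ℝ :=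
  ⋃ w ∈ {w : List ℕ | w.length = l ∧ ∀ i ∈ w, 1 ≤ i ∧ i ≤ n}, wordComp g w '' Icc (0 : ℝ) 1

variable {g : ℕ → ℝ → ℝ} {n : ℕ}

lemma cylinderUnion_zero (g : ℕ → ℝ → ℝ) (n : ℕ) : cylinderUnion g n 0 = Icc 0 1 := by
  ext x
  simp +contextual [cylinderUnion, wordComp]

lemma cylinderUnion_succ (g : ℕ → ℝ → ℝ) (n l : ℕ) :
    cylinderUnion g n (l + 1) = ⋃ k ∈ Finset.Ioc 0 n, g k '' cylinderUnion g n l := by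
  ext x
  simp only [cylinderUnion, mem_iUnion, mem_ofPred_eq, exists_prop, image_iUnion, image_image,
    Finset.mem_Ioc]
  constructor
  · rintro ⟨_ | ⟨k, w⟩, ⟨hl, hw⟩, hx⟩
    · simp at hl
    · rw [List.forall_mem_cons] at hw
      exact ⟨k, hw.1, w, ⟨Nat.succ.inj hl, hw.2⟩, hx⟩
  · rintro ⟨k, hk, w, ⟨hl, hw⟩, hx⟩
    exact ⟨k :: w, ⟨congrArg Nat.succ hl, List.forall_mem_cons.2 ⟨hk, hw⟩⟩, hx⟩

section MapsTo

variable (hmaps : ∀ k ∈ Finset.Ioc 0 n, MapsTo (g k) (Icc 0 1) (Icc 0 1))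
include hmaps

lemma antitone_cylinderUnion : Antitone (cylinderUnion g n) := by
  refine antitone_nat_of_succ_le fun l => ?_
  induction l with
  | zero =>
    rw [cylinderUnion_succ, cylinderUnion_zero]
    exact iUnion₂_subset fun k hk => (hmaps k hk).image_subset
  | succ l ih =>
    rw [cylinderUnion_succ g n (l + 1), cylinderUnion_succ g n l]
    rw [cylinderUnion_succ] at ih
    exact iUnion₂_mono fun k _ => image_mono ih

lemma cylinderUnion_subset_Icc (l : ℕ) : cylinderUnion g n l ⊆ Icc 0 1 :=
  (antitone_cylinderUnion hmaps l.zero_le).trans (cylinderUnion_zero g n).subset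

lemma limitSet_subset_Icc : limitSet g n ⊆ Icc 0 1 :=
  (iInter_subset _ 0).trans (cylinderUnion_subset_Icc hmaps 1)

lemma limitSet_subset_iUnion_image (hinj : ∀ k ∈ Finset.Ioc 0 n, InjOn (g k) (Icc 0 1)) :
    limitSet g n ⊆ ⋃ k ∈ Finset.Ioc 0 n, g k '' limitSet g n := by
  have hanti := antitone_cylinderUnion hmaps
  calc limitSet g n ⊆ ⋂ l, cylinderUnion g n (l + 2) :=
        subset_iInter fun l => iInter_subset _ (l + 1)
    _ = ⋂ l, ⋃ k : Finset.Ioc 0 n, g k '' cylinderUnion g n (l + 1) := by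
        simp_rw [cylinderUnion_succ g n (_ + 1), iUnion_subtype]
    _ = ⋃ k : Finset.Ioc 0 n, ⋂ l, g k '' cylinderUnion g n (l + 1) :=
        iInter_iUnion_of_antitone fun k l l' hl => image_mono (hanti (Nat.succ_le_succ hl))
    _ = ⋃ k : Finset.Ioc 0 n, g k '' limitSet g n := by
        refine iUnion_congr fun k => (InjOn.image_iInter_eq ((hinj k k.2).mono ?_)).symm
        exact iUnion_subset fun l => cylinderUnion_subset_Icc hmaps _
    _ = _ := iUnion_subtype _ _

lemma isCompact_cylinderUnion (hcont : ∀ k ∈ Finset.Ioc 0 n, ContinuousOn (g k) (Icc 0 1))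
    (l : ℕ) : IsCompact (cylinderUnion g n l) := by
  induction l with
  | zero => exact cylinderUnion_zero g n ▸ isCompact_Icc
  | succ l ih =>
    rw [cylinderUnion_succ]
    exact (Finset.Ioc 0 n).isCompact_biUnion fun k hk =>
      ih.image_of_continuousOn ((hcont k hk).mono (cylinderUnion_subset_Icc hmaps l))

lemma measurableSet_limitSet (hcont : ∀ k ∈ Finset.Ioc 0 n, ContinuousOn (g k) (Icc 0 1)) :
    MeasurableSet (limitSet g n) :=
  .iInter fun l => (isCompact_cylinderUnion hmaps hcont (l + 1)).measurableSet

end MapsTo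

end LimitSet

/-- Contractions `g k` of `[0, 1]` onto the consecutive intervals `[b k, b (k - 1)]`, `k ≥ 1`, of a
sequence decreasing from `1` to `0`, with `|deriv (g k)| ≤ α < 1` and bounded distortion: the
functions `|deriv (g k)|` are log-Lipschitz with a common constant `c`. -/
structure IsLogLipschitzIFS (g : ℕ → ℝ → ℝ) (b : ℕ → ℝ) (c α : ℝ) : Prop where
  b_zero : b 0 = 1
  strictAnti_b : StrictAnti b
  tendsto_b : Tendsto b atTop (𝓝 0)
  image_eq : ∀ k, 1 ≤ k → g k '' Icc 0 1 = Icc (b k) (b (k - 1))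
  injOn : ∀ k, 1 ≤ k → InjOn (g k) (Icc 0 1)
  differentiableAt : ∀ k, 1 ≤ k → ∀ x ∈ Icc (0 : ℝ) 1, DifferentiableAt ℝ (g k) x
  logLipschitzOn_deriv : ∀ k, 1 ≤ k → LogLipschitzOn c (fun x => |deriv (g k) x|) (Icc 0 1)
  abs_deriv_le : ∀ k, 1 ≤ k → ∀ x ∈ Icc (0 : ℝ) 1, |deriv (g k) x| ≤ α
  c_nonneg : 0 ≤ c
  alpha_lt_one : α < 1

/-- The transfer operator with exponent `h` of the maps `g k`, `k ∈ s`. -/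
def transferOp (g : ℕ → ℝ → ℝ) (s : Finset ℕ) (h : ℝ) (ψ : ℝ → ℝ) (x : ℝ) : ℝ :=
  ∑ k ∈ s, ψ (g k x) * |deriv (g k) x| ^ h

instance isProbabilityMeasure_restrict_Icc_zero_one :
    IsProbabilityMeasure (volume.restrict (Icc (0 : ℝ) 1)) := ⟨by simp⟩

lemma ae_restrict_Icc_zero_one_mem :
    ∀ᵐ x ∂(volume.restrict (Icc (0 : ℝ) 1)), x ∈ Icc (0 : ℝ) 1 :=
  ae_restrict_mem measurableSet_Icc

/-- Weighted AM-GM: `(y / t) ^ h ≤ h * (y / t) + (1 - h)`. -/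
lemma rpow_le_rpow_sub_one_mul {y t h : ℝ} (hy : 0 ≤ y) (ht : 0 < t) (hh₀ : 0 ≤ h) (hh₁ : h ≤ 1) :
    y ^ h ≤ t ^ (h - 1) * (h * y + (1 - h) * t) := by
  have hamgm := Real.geom_mean_le_arith_mean2_weighted hh₀ (sub_nonneg.2 hh₁) hy ht.le (by ring)
  calc y ^ h = t ^ (h - 1) * (y ^ h * t ^ (1 - h)) := by
        rw [mul_left_comm, ← Real.rpow_add ht]
        simp
    _ ≤ _ := mul_le_mul_of_nonneg_left hamgm (Real.rpow_nonneg ht.le _)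

namespace IsLogLipschitzIFS

variable {g : ℕ → ℝ → ℝ} {b : ℕ → ℝ} {c α C h : ℝ} {ψ : ℝ → ℝ} {j k n : ℕ}
  (hg : IsLogLipschitzIFS g b c α)

include hg

lemma b_pos (k : ℕ) : 0 < b k :=
  (hg.strictAnti_b.antitone.le_of_tendsto hg.tendsto_b (k + 1)).trans_lt
    (hg.strictAnti_b k.lt_succ_self)

lemma b_le_one (k : ℕ) : b k ≤ 1 := hg.b_zero ▸ hg.strictAnti_b.antitone k.zero_le

lemma b_le_b (hjn : j ≤ n) : b n ≤ b j := hg.strictAnti_b.antitone hjn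

lemma Icc_subset_Icc_zero_one (j n : ℕ) : Icc (b n) (b j) ⊆ Icc 0 1 :=
  Icc_subset_Icc (hg.b_pos n).le (hg.b_le_one j)

lemma abs_deriv_pos (hk : 1 ≤ k) {x : ℝ} (hx : x ∈ Icc (0 : ℝ) 1) : 0 < |deriv (g k) x| :=
  (hg.logLipschitzOn_deriv k hk).1 x hx

lemma alpha_pos : 0 < α :=
  (hg.abs_deriv_pos le_rfl (left_mem_Icc.2 zero_le_one)).trans_le
    (hg.abs_deriv_le 1 le_rfl 0 (left_mem_Icc.2 zero_le_one))

lemma mapsTo (hk : 1 ≤ k) : MapsTo (g k) (Icc 0 1) (Icc 0 1) :=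
  mapsTo_iff_image_subset.2 <|
    (hg.image_eq k hk).subset.trans (hg.Icc_subset_Icc_zero_one (k - 1) k)

lemma continuousOn (hk : 1 ≤ k) : ContinuousOn (g k) (Icc 0 1) :=
  fun x hx => (hg.differentiableAt k hk x hx).continuousAt.continuousWithinAt

lemma dist_le (hk : 1 ≤ k) {x y : ℝ} (hx : x ∈ Icc (0 : ℝ) 1) (hy : y ∈ Icc (0 : ℝ) 1) :
    dist (g k x) (g k y) ≤ α * dist x y := by
  simpa only [Real.dist_eq, Real.norm_eq_abs] using
    (convex_Icc (0 : ℝ) 1).norm_image_sub_le_of_norm_deriv_le (hg.differentiableAt k hk)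
      (hg.abs_deriv_le k hk) hy hx

lemma logLipschitzOn_branch (hC : 0 ≤ C) (hh₀ : 0 ≤ h) (hh₁ : h ≤ 1)
    (hψ : LogLipschitzOn C ψ (Icc 0 1)) (hk : 1 ≤ k) :
    LogLipschitzOn (C * α + c) (fun x => ψ (g k x) * |deriv (g k) x| ^ h) (Icc 0 1) :=
  ((hψ.comp hC (hg.mapsTo hk) fun _ hx _ hy => hg.dist_le hk hx hy).mul
    ((hg.logLipschitzOn_deriv k hk).rpow hh₀)).mono
      (by linarith [mul_le_of_le_one_left hg.c_nonneg hh₁])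

lemma logLipschitzOn_transferOp (hC : 0 ≤ C) (hh₀ : 0 ≤ h) (hh₁ : h ≤ 1)
    (hψ : LogLipschitzOn C ψ (Icc 0 1)) (hjn : j < n) :
    LogLipschitzOn (C * α + c) (transferOp g (Finset.Ioc j n) h ψ) (Icc 0 1) :=
  .sum (Finset.nonempty_Ioc.2 hjn) fun _ hk => hg.logLipschitzOn_branch hC hh₀ hh₁ hψ
    (Nat.one_le_of_lt (Finset.mem_Ioc.1 hk).1)

lemma integral_comp_mul_abs_deriv (ψ : ℝ → ℝ) (hk : 1 ≤ k) :
    ∫ x in Icc 0 1, ψ (g k x) * |deriv (g k) x| = ∫ x in b k..b (k - 1), ψ x := by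
  rw [intervalIntegral.integral_of_le (hg.b_le_b (k.sub_le 1)), ← integral_Icc_eq_integral_Ioc,
    ← hg.image_eq k hk, integral_image_eq_integral_abs_deriv_smul measurableSet_Icc
      (fun x hx => (hg.differentiableAt k hk x hx).hasDerivAt.hasDerivWithinAt) (hg.injOn k hk)]
  simp_rw [smul_eq_mul, mul_comm]

lemma sum_integral_comp_mul_abs_deriv (hψ : ContinuousOn ψ (Icc 0 1)) (hjn : j ≤ n) :
    ∑ k ∈ Finset.Ioc j n, ∫ x in Icc 0 1, ψ (g k x) * |deriv (g k) x| =
      ∫ x in b n..b j, ψ x := by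
  have hint : ∀ {i l : ℕ}, i ≤ l → IntervalIntegrable ψ volume (b l) (b i) := fun hil =>
    (hψ.mono (hg.Icc_subset_Icc_zero_one _ _)).intervalIntegrable_of_Icc (hg.b_le_b hil)
  induction n, hjn using Nat.le_induction with
  | base => simp
  | succ n hjn ih =>
    rw [Finset.sum_Ioc_succ_top hjn, ih, hg.integral_comp_mul_abs_deriv ψ n.succ_pos, add_comm]
    exact intervalIntegral.integral_add_adjacent_intervals (hint n.le_succ) (hint hjn)

lemma integral_branch_le {M t : ℝ} (hC : 0 ≤ C) (hh₀ : 0 ≤ h) (hh₁ : h ≤ 1) (ht : 0 < t)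
    (hψ : LogLipschitzOn C ψ (Icc 0 1)) (hM : ∀ x ∈ Icc 0 1, ψ x ≤ M) (hk : 1 ≤ k) :
    ∫ x in Icc 0 1, ψ (g k x) * |deriv (g k) x| ^ h ≤
      t ^ (h - 1) * (h * (∫ x in Icc 0 1, ψ (g k x) * |deriv (g k) x|) + (1 - h) * t * M) := by
  have hint {p : ℝ} (hp₀ : 0 ≤ p) (hp₁ : p ≤ 1) :
      IntegrableOn (fun x => ψ (g k x) * |deriv (g k) x| ^ p) (Icc 0 1) :=
    (hg.logLipschitzOn_branch hC hp₀ hp₁ hψ hk).integrable isCompact_Icc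
      ae_restrict_Icc_zero_one_mem
  have hint_one : IntegrableOn (fun x => ψ (g k x) * |deriv (g k) x|) (Icc 0 1) := by
    simpa using hint zero_le_one le_rfl
  calc ∫ x in Icc 0 1, ψ (g k x) * |deriv (g k) x| ^ h
      ≤ ∫ x in Icc 0 1, t ^ (h - 1) * (h * (ψ (g k x) * |deriv (g k) x|) + (1 - h) * t * M) := by
        refine setIntegral_mono_on (hint hh₀ hh₁) (((hint_one.const_mul h).add
          (integrable_const ((1 - h) * t * M))).const_mul _) measurableSet_Icc fun x hx => ?_
        have hψpos : 0 < ψ (g k x) := hψ.1 _ (hg.mapsTo hk hx)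
        have hψM : ψ (g k x) ≤ M := hM _ (hg.mapsTo hk hx)
        calc ψ (g k x) * |deriv (g k) x| ^ h
            ≤ ψ (g k x) * (t ^ (h - 1) * (h * |deriv (g k) x| + (1 - h) * t)) := by
              gcongr
              exact rpow_le_rpow_sub_one_mul (abs_nonneg _) ht hh₀ hh₁
          _ = t ^ (h - 1) * (h * (ψ (g k x) * |deriv (g k) x|) + (1 - h) * t * ψ (g k x)) := by
              ring
          _ ≤ t ^ (h - 1) * (h * (ψ (g k x) * |deriv (g k) x|) + (1 - h) * t * M) := by
              have := sub_nonneg.2 hh₁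
              gcongr
    _ = _ := by
        rw [integral_const_mul, integral_add (hint_one.const_mul h) (integrable_const _),
          integral_const_mul]
        simp

lemma integral_transferOp_le {M t : ℝ} (hC : 0 ≤ C) (hh₀ : 0 ≤ h) (hh₁ : h ≤ 1) (ht : 0 < t)
    (hψ : LogLipschitzOn C ψ (Icc 0 1)) (hM : ∀ x ∈ Icc 0 1, ψ x ≤ M) (hjn : j ≤ n) :
    ∫ x in Icc 0 1, transferOp g (Finset.Ioc j n) h ψ x ≤
      t ^ (h - 1) * (h * (∫ x in b n..b j, ψ x) + (1 - h) * t * (n * M)) := by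
  have hone_le : ∀ k ∈ Finset.Ioc j n, 1 ≤ k := fun k hk =>
    Nat.one_le_of_lt (Finset.mem_Ioc.1 hk).1
  have hM₀ : 0 ≤ M :=
    (hψ.1 0 (left_mem_Icc.2 zero_le_one)).le.trans (hM 0 (left_mem_Icc.2 zero_le_one))
  have hcard : ((Finset.Ioc j n).card : ℝ) ≤ n := by simp
  calc ∫ x in Icc 0 1, transferOp g (Finset.Ioc j n) h ψ x
      = ∑ k ∈ Finset.Ioc j n, ∫ x in Icc 0 1, ψ (g k x) * |deriv (g k) x| ^ h :=
        integral_finsetSum _ fun k hk =>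
          (hg.logLipschitzOn_branch hC hh₀ hh₁ hψ (hone_le k hk)).integrable isCompact_Icc
            ae_restrict_Icc_zero_one_mem
    _ ≤ ∑ k ∈ Finset.Ioc j n, t ^ (h - 1) *
          (h * (∫ x in Icc 0 1, ψ (g k x) * |deriv (g k) x|) + (1 - h) * t * M) :=
        Finset.sum_le_sum fun k hk => hg.integral_branch_le hC hh₀ hh₁ ht hψ hM (hone_le k hk)
    _ = t ^ (h - 1) *
          (h * (∫ x in b n..b j, ψ x) + (1 - h) * t * ((Finset.Ioc j n).card * M)) := by
        rw [← Finset.mul_sum, Finset.sum_add_distrib, ← Finset.mul_sum,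
          hg.sum_integral_comp_mul_abs_deriv hψ.continuousOn hjn, Finset.sum_const, nsmul_eq_mul]
        ring
    _ ≤ _ := by
        have := sub_nonneg.2 hh₁
        gcongr

lemma integral_transferOp_le_mul_integral (hC : 0 ≤ C) (hh₀ : 0 ≤ h) (hh₁ : h ≤ 1)
    (hψ : LogLipschitzOn C ψ (Icc 0 1)) (hn : 1 ≤ n) :
    ∫ x in Icc 0 1, transferOp g (Finset.Ioc 0 n) h ψ x ≤
      (n : ℝ) ^ (1 - h) * (h + (1 - h) * Real.exp C) * ∫ x in Icc 0 1, ψ x := by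
  have hn₀ : (0 : ℝ) < n := by exact_mod_cast hn
  have hM : ∀ x ∈ Icc (0 : ℝ) 1, ψ x ≤ Real.exp C * ∫ y in Icc 0 1, ψ y := fun x hx => by
    simpa [Real.diam_Icc] using
      hψ.le_exp_mul_integral hC isCompact_Icc ae_restrict_Icc_zero_one_mem hx
  have hsubset : ∫ x in b n..b 0, ψ x ≤ ∫ x in Icc 0 1, ψ x := by
    rw [intervalIntegral.integral_of_le (hg.b_le_b n.zero_le), ← integral_Icc_eq_integral_Ioc]
    exact setIntegral_mono_set (hψ.integrable isCompact_Icc ae_restrict_Icc_zero_one_mem)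
      (ae_restrict_Icc_zero_one_mem.mono fun x hx => (hψ.1 x hx).le)
      (hg.Icc_subset_Icc_zero_one 0 n).eventuallyLE
  calc ∫ x in Icc 0 1, transferOp g (Finset.Ioc 0 n) h ψ x
      ≤ (n : ℝ)⁻¹ ^ (h - 1) * (h * (∫ x in b n..b 0, ψ x) +
          (1 - h) * (n : ℝ)⁻¹ * (n * (Real.exp C * ∫ x in Icc 0 1, ψ x))) :=
        hg.integral_transferOp_le hC hh₀ hh₁ (inv_pos.2 hn₀) hψ hM n.zero_le
    _ ≤ (n : ℝ)⁻¹ ^ (h - 1) * (h * (∫ x in Icc 0 1, ψ x) +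
          (1 - h) * (n : ℝ)⁻¹ * (n * (Real.exp C * ∫ x in Icc 0 1, ψ x))) := by
        gcongr
    _ = _ := by
        rw [Real.inv_rpow hn₀.le, ← Real.rpow_neg hn₀.le, neg_sub]
        field_simp

lemma integral_transferOp_one_le (hh₀ : 0 ≤ h) (hh₁ : h ≤ 1) (hn : 1 ≤ n) (hjn : j ≤ n) :
    ∫ x in Icc 0 1, transferOp g (Finset.Ioc j n) h (fun _ => 1) x ≤
      (n : ℝ) ^ (1 - h) * b j ^ h := by
  have hn₀ : (0 : ℝ) < n := by exact_mod_cast hn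
  have hbj : 0 < b j := hg.b_pos j
  calc ∫ x in Icc 0 1, transferOp g (Finset.Ioc j n) h (fun _ => 1) x
      ≤ (b j / n) ^ (h - 1) * (h * (∫ _ in b n..b j, (1 : ℝ)) + (1 - h) * (b j / n) * (n * 1)) :=
        hg.integral_transferOp_le le_rfl hh₀ hh₁ (by positivity) (.one le_rfl)
          (fun _ _ => le_rfl) hjn
    _ ≤ (b j / n) ^ (h - 1) * (h * b j + (1 - h) * (b j / n) * (n * 1)) := by
        gcongr
        simpa using (hg.b_pos n).le
    _ = (n : ℝ) ^ (1 - h) * (b j ^ (h - 1) * b j) := by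
        rw [Real.div_rpow hbj.le hn₀.le, div_eq_mul_inv _ ((n : ℝ) ^ (h - 1)),
          ← Real.rpow_neg hn₀.le, neg_sub]
        field_simp
        ring
    _ = _ := by rw [← Real.rpow_add_one hbj.ne', sub_add_cancel]

lemma mul_integral_le_transferOp (hC : 0 ≤ C) (hh₁ : h ≤ 1)
    (hψ : LogLipschitzOn C ψ (Icc 0 1)) (hn : 1 ≤ n) {x : ℝ} (hx : x ∈ Icc (0 : ℝ) 1) :
    Real.exp (-(C + c)) * |deriv (g 1) 0| * ∫ y in Icc 0 1, ψ y ≤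
      transferOp g (Finset.Ioc 0 n) h ψ x := by
  have hψ_lower : Real.exp (-C) * ∫ y in Icc 0 1, ψ y ≤ ψ (g 1 x) := by
    rw [Real.exp_neg, inv_mul_le_iff₀ (Real.exp_pos _)]
    simpa [Real.diam_Icc] using hψ.integral_le_exp_mul hC isCompact_Icc ae_restrict_Icc_zero_one_mem
      (hg.mapsTo le_rfl hx)
  have hderiv_lower : Real.exp (-c) * |deriv (g 1) 0| ≤ |deriv (g 1) x| := by
    rw [Real.exp_neg, inv_mul_le_iff₀ (Real.exp_pos _)]
    simpa [Real.diam_Icc] using (hg.logLipschitzOn_deriv 1 le_rfl).le_exp_diam_mul hg.c_nonneg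
      (Metric.isBounded_Icc 0 1) (left_mem_Icc.2 zero_le_one) hx
  calc Real.exp (-(C + c)) * |deriv (g 1) 0| * ∫ y in Icc 0 1, ψ y
      = (Real.exp (-C) * ∫ y in Icc 0 1, ψ y) * (Real.exp (-c) * |deriv (g 1) 0|) := by
        rw [neg_add, Real.exp_add]
        ring
    _ ≤ ψ (g 1 x) * |deriv (g 1) x| := by
        have := hψ.1 _ (hg.mapsTo le_rfl hx)
        gcongr
    _ ≤ ψ (g 1 x) * |deriv (g 1) x| ^ h := by
        have := hψ.1 _ (hg.mapsTo le_rfl hx)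
        gcongr
        exact Real.self_le_rpow_of_le_one (abs_nonneg _)
          ((hg.abs_deriv_le 1 le_rfl x hx).trans hg.alpha_lt_one.le) hh₁
    _ ≤ transferOp g (Finset.Ioc 0 n) h ψ x :=
        Finset.single_le_sum (f := fun k => ψ (g k x) * |deriv (g k) x| ^ h)
          (fun k hk => mul_nonneg (hψ.1 _ (hg.mapsTo (Finset.mem_Ioc.1 hk).1 hx)).le
            (Real.rpow_nonneg (abs_nonneg _) h)) (Finset.mem_Ioc.2 ⟨one_pos, hn⟩)

end IsLogLipschitzIFS

/-- The normalized `h`-dimensional Hausdorff measure on `limitSet g n`. If the limit set has measure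
`0` or `∞`, this is the zero measure. -/
def limitMeasure (g : ℕ → ℝ → ℝ) (h : ℝ) (n : ℕ) : Measure ℝ :=
  ProbabilityTheory.cond μH[h] (limitSet g n)

instance isZeroOrProbabilityMeasure_limitMeasure (g : ℕ → ℝ → ℝ) (h : ℝ) (n : ℕ) :
    IsZeroOrProbabilityMeasure (limitMeasure g h n) := by
  unfold limitMeasure
  infer_instance

lemma setLIntegral_biUnion_finset_le {X ι : Type*} [MeasurableSpace X] {μ : Measure X}
    (I : Finset ι) (A : ι → Set X) (Ψ : X → ENNReal) :
    ∫⁻ x in ⋃ i ∈ I, A i, Ψ x ∂μ ≤ ∑ i ∈ I, ∫⁻ x in A i, Ψ x ∂μ := by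
  rw [← Finset.tsum_subtype I fun i => ∫⁻ x in A i, Ψ x ∂μ,
    ← iUnion_subtype (· ∈ I) fun i => A i]
  exact lintegral_iUnion_le _ _

namespace IsLogLipschitzIFS

variable {g : ℕ → ℝ → ℝ} {b : ℕ → ℝ} {c α C h : ℝ} {ψ : ℝ → ℝ} {j k n : ℕ} {B : Set ℝ}
  (hg : IsLogLipschitzIFS g b c α)

include hg

lemma limitSet_subset (n : ℕ) : limitSet g n ⊆ Icc 0 1 :=
  limitSet_subset_Icc fun _ hk => hg.mapsTo (Finset.mem_Ioc.1 hk).1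

lemma measurableSet_limitSet (n : ℕ) : MeasurableSet (limitSet g n) :=
  _root_.measurableSet_limitSet (fun _ hk => hg.mapsTo (Finset.mem_Ioc.1 hk).1)
    fun _ hk => hg.continuousOn (Finset.mem_Ioc.1 hk).1

lemma limitSet_subset_iUnion (n : ℕ) :
    limitSet g n ⊆ ⋃ k ∈ Finset.Ioc 0 n, g k '' limitSet g n :=
  limitSet_subset_iUnion_image (fun _ hk => hg.mapsTo (Finset.mem_Ioc.1 hk).1)
    fun k hk => hg.injOn k (Finset.mem_Ioc.1 hk).1

lemma limitMeasure_apply (A : Set ℝ) :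
    limitMeasure g h n A = μH[h] (A ∩ limitSet g n) / μH[h] (limitSet g n) := by
  rw [limitMeasure, ProbabilityTheory.cond_apply (hg.measurableSet_limitSet n), inter_comm,
    mul_comm, div_eq_mul_inv]

lemma ae_limitMeasure_mem_limitSet : ∀ᵐ x ∂(limitMeasure g h n), x ∈ limitSet g n :=
  ProbabilityTheory.ae_cond_mem (hg.measurableSet_limitSet n)

lemma ae_limitMeasure_mem_Icc : ∀ᵐ x ∂(limitMeasure g h n), x ∈ Icc (0 : ℝ) 1 :=
  hg.ae_limitMeasure_mem_limitSet.mono fun _ hx => hg.limitSet_subset n hx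

lemma setLIntegral_limitMeasure_image_le (hh₀ : 0 ≤ h) (hk : 1 ≤ k) (Ψ : ℝ → ENNReal) :
    ∫⁻ x in g k '' limitSet g n, Ψ x ∂(limitMeasure g h n) ≤
      ∫⁻ x, ‖deriv (g k) x‖ₑ ^ h * Ψ (g k x) ∂(limitMeasure g h n) := by
  simp only [limitMeasure, ProbabilityTheory.cond, Measure.restrict_smul, lintegral_smul_measure,
    smul_eq_mul]
  gcongr (μH[h] (limitSet g n))⁻¹ * ?_
  calc ∫⁻ x in g k '' limitSet g n, Ψ x ∂(μH[h]).restrict (limitSet g n)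
      ≤ ∫⁻ x in g k '' limitSet g n, Ψ x ∂μH[h] :=
        lintegral_mono' (Measure.restrict_mono le_rfl Measure.restrict_le_self) le_rfl
    _ ≤ _ := setLIntegral_hausdorffMeasure_image_le (hg.differentiableAt k hk)
        (hg.logLipschitzOn_deriv k hk).continuousOn
        (fun x hx => abs_pos.1 (hg.abs_deriv_pos hk hx)) hh₀ (hg.measurableSet_limitSet n)
        (hg.limitSet_subset n) Ψ

lemma setLIntegral_limitMeasure_le_integral_transferOp (hC : 0 ≤ C) (hh₀ : 0 ≤ h) (hh₁ : h ≤ 1)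
    (hψ : LogLipschitzOn C ψ (Icc 0 1)) (hB : B ⊆ ⋃ k ∈ Finset.Ioc j n, g k '' limitSet g n) :
    ∫⁻ x in B, ENNReal.ofReal (ψ x) ∂(limitMeasure g h n) ≤
      ENNReal.ofReal (∫ x, transferOp g (Finset.Ioc j n) h ψ x ∂(limitMeasure g h n)) := by
  set m := limitMeasure g h n
  have hone_le : ∀ k ∈ Finset.Ioc j n, 1 ≤ k := fun k hk =>
    Nat.one_le_of_lt (Finset.mem_Ioc.1 hk).1
  have hbranch : ∀ k ∈ Finset.Ioc j n,
      LogLipschitzOn (C * α + c) (fun x => ψ (g k x) * |deriv (g k) x| ^ h) (Icc 0 1) :=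
    fun k hk => hg.logLipschitzOn_branch hC hh₀ hh₁ hψ (hone_le k hk)
  have hint : ∀ k ∈ Finset.Ioc j n, Integrable (fun x => ψ (g k x) * |deriv (g k) x| ^ h) m :=
    fun k hk => (hbranch k hk).integrable isCompact_Icc hg.ae_limitMeasure_mem_Icc
  have hnonneg : ∀ k ∈ Finset.Ioc j n, 0 ≤ᵐ[m] fun x => ψ (g k x) * |deriv (g k) x| ^ h :=
    fun k hk => hg.ae_limitMeasure_mem_Icc.mono fun x hx => ((hbranch k hk).1 x hx).le
  calc ∫⁻ x in B, ENNReal.ofReal (ψ x) ∂m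
      ≤ ∑ k ∈ Finset.Ioc j n, ∫⁻ x in g k '' limitSet g n, ENNReal.ofReal (ψ x) ∂m :=
        (lintegral_mono_set hB).trans (setLIntegral_biUnion_finset_le _ _ _)
    _ ≤ ∑ k ∈ Finset.Ioc j n, ∫⁻ x, ‖deriv (g k) x‖ₑ ^ h * ENNReal.ofReal (ψ (g k x)) ∂m :=
        Finset.sum_le_sum fun k hk => hg.setLIntegral_limitMeasure_image_le hh₀ (hone_le k hk) _
    _ = ∑ k ∈ Finset.Ioc j n, ∫⁻ x, ENNReal.ofReal (ψ (g k x) * |deriv (g k) x| ^ h) ∂m := by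
        refine Finset.sum_congr rfl fun k _ => lintegral_congr fun x => ?_
        rw [ENNReal.ofReal_mul' (by positivity), mul_comm, Real.enorm_eq_ofReal_abs,
          ENNReal.ofReal_rpow_of_nonneg (abs_nonneg _) hh₀]
    _ = ∑ k ∈ Finset.Ioc j n, ENNReal.ofReal (∫ x, ψ (g k x) * |deriv (g k) x| ^ h ∂m) :=
        Finset.sum_congr rfl fun k hk =>
          (ofReal_integral_eq_lintegral_ofReal (hint k hk) (hnonneg k hk)).symm
    _ = _ := by
        simp_rw [transferOp]
        rw [integral_finsetSum _ hint,
          ENNReal.ofReal_sum_of_nonneg fun k hk => integral_nonneg_of_ae (hnonneg k hk)]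

lemma integral_limitMeasure_le_integral_transferOp (hC : 0 ≤ C) (hh₀ : 0 ≤ h) (hh₁ : h ≤ 1)
    (hψ : LogLipschitzOn C ψ (Icc 0 1)) :
    ∫ x, ψ x ∂(limitMeasure g h n) ≤
      ∫ x, transferOp g (Finset.Ioc 0 n) h ψ x ∂(limitMeasure g h n) := by
  set m := limitMeasure g h n
  have hmem := hg.ae_limitMeasure_mem_Icc (h := h) (n := n)
  have hLψ : 0 ≤ ∫ x, transferOp g (Finset.Ioc 0 n) h ψ x ∂m :=
    integral_nonneg_of_ae <| hmem.mono fun x hx => Finset.sum_nonneg fun k hk =>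
      ((hg.logLipschitzOn_branch hC hh₀ hh₁ hψ (Finset.mem_Ioc.1 hk).1).1 x hx).le
  rw [← ENNReal.ofReal_le_ofReal_iff hLψ, ofReal_integral_eq_lintegral_ofReal
      (hψ.integrable isCompact_Icc hmem) (hmem.mono fun x hx => (hψ.1 x hx).le)]
  calc ∫⁻ x, ENNReal.ofReal (ψ x) ∂m
      = ∫⁻ x in limitSet g n, ENNReal.ofReal (ψ x) ∂m := by
        rw [Measure.restrict_eq_self_of_ae_mem hg.ae_limitMeasure_mem_limitSet]
    _ ≤ _ := hg.setLIntegral_limitMeasure_le_integral_transferOp hC hh₀ hh₁ hψ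
        (hg.limitSet_subset_iUnion n)

end IsLogLipschitzIFS

section Exponents

variable {h : ℕ → ℝ} (hN1 : Tendsto (fun n : ℕ => (1 - h n) * Real.log n) atTop (𝓝 0))
include hN1

lemma tendsto_one_of_tendsto_one_sub_mul_log : Tendsto h atTop (𝓝 1) := by
  have hlog : Tendsto (fun n : ℕ => (Real.log n)⁻¹) atTop (𝓝 0) :=
    (Real.tendsto_log_atTop.comp tendsto_natCast_atTop_atTop).inv_tendsto_atTop
  have hlim : Tendsto (fun n : ℕ => 1 - (1 - h n) * Real.log n * (Real.log n)⁻¹) atTop (𝓝 1) := by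
    simpa using (hN1.mul hlog).const_sub 1
  refine hlim.congr' ?_
  filter_upwards [eventually_ge_atTop 2] with n hn
  have hlog_pos : 0 < Real.log n := Real.log_pos (by exact_mod_cast hn)
  rw [mul_inv_cancel_right₀ hlog_pos.ne', sub_sub_cancel]

lemma tendsto_natCast_rpow_one_sub : Tendsto (fun n : ℕ => (n : ℝ) ^ (1 - h n)) atTop (𝓝 1) := by
  have hexp : Tendsto (fun n : ℕ => Real.exp ((1 - h n) * Real.log n)) atTop (𝓝 1) := by
    simpa using hN1.rexp
  refine hexp.congr' ?_
  filter_upwards [eventually_ge_atTop 1] with n hn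
  rw [Real.rpow_def_of_pos (by exact_mod_cast hn), mul_comm]

end Exponents

section TestFunction

variable {N r : ℝ}

lemma logLipschitzOn_exp_neg_mul_max (hN : 0 ≤ N) (r : ℝ) (s : Set ℝ) :
    LogLipschitzOn N (fun x => Real.exp (-(N * max 0 (x - r)))) s := by
  refine .exp_of_lipschitzOn fun x _ y _ => ?_
  have hmax : max 0 (y - r) - max 0 (x - r) ≤ dist x y := by
    rw [dist_comm]
    refine (le_abs_self _).trans ((abs_max_sub_max_le_max _ _ _ _).trans ?_)
    simp [Real.dist_eq]
  linarith [mul_le_mul_of_nonneg_left hmax hN]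

lemma integral_exp_neg_mul_sub_le (hN : 0 < N) (r : ℝ) :
    ∫ x in r..1, Real.exp (-(N * (x - r))) ≤ 1 / N := by
  have hderiv : ∀ x ∈ uIcc r 1, HasDerivAt (fun x => -(Real.exp (-(N * (x - r))) / N))
      (Real.exp (-(N * (x - r)))) x := by
    intro x _
    have hlin : HasDerivAt (fun x => -(N * (x - r))) (-N) x := by
      simpa using (((hasDerivAt_id x).sub_const r).const_mul N).fun_neg
    exact (hlin.exp.div_const N).fun_neg.congr_deriv (by field_simp)
  rw [intervalIntegral.integral_eq_sub_of_hasDerivAt hderiv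
    (Continuous.intervalIntegrable (by fun_prop) _ _)]
  simp only [sub_self, mul_zero, neg_zero, Real.exp_zero, sub_neg_eq_add]
  linarith [div_pos (Real.exp_pos (-(N * (1 - r)))) hN]

lemma integral_exp_neg_mul_max_le (hN : 0 < N) (hr₀ : 0 ≤ r) (hr₁ : r ≤ 1) :
    ∫ x in Icc 0 1, Real.exp (-(N * max 0 (x - r))) ≤ r + 1 / N := by
  have hint (u v : ℝ) :
      IntervalIntegrable (fun x => Real.exp (-(N * max 0 (x - r)))) volume u v :=
    Continuous.intervalIntegrable (by fun_prop) _ _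
  rw [integral_Icc_eq_integral_Ioc, ← intervalIntegral.integral_of_le zero_le_one,
    ← intervalIntegral.integral_add_adjacent_intervals (hint 0 r) (hint r 1)]
  have hleft : ∫ x in 0..r, Real.exp (-(N * max 0 (x - r))) = ∫ _ in 0..r, (1 : ℝ) := by
    refine intervalIntegral.integral_congr fun x hx => ?_
    rw [uIcc_of_le hr₀] at hx
    simp [max_eq_left (sub_nonpos.2 hx.2)]
  have hright : ∫ x in r..1, Real.exp (-(N * max 0 (x - r))) =
      ∫ x in r..1, Real.exp (-(N * (x - r))) := by
    refine intervalIntegral.integral_congr fun x hx => ?_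
    rw [uIcc_of_le hr₁] at hx
    simp only [max_eq_right (sub_nonneg.2 hx.1)]
  rw [hleft, hright, intervalIntegral.integral_const, sub_zero, smul_eq_mul, mul_one]
  exact add_le_add_right (integral_exp_neg_mul_sub_le hN r) r

lemma measureReal_Iic_le_integral_exp_neg_mul_max {μ : Measure ℝ} [IsFiniteMeasure μ] (hN : 0 ≤ N) :
    μ.real (Iic r) ≤ ∫ x, Real.exp (-(N * max 0 (x - r))) ∂μ := by
  have hle_one : ∀ x, Real.exp (-(N * max 0 (x - r))) ≤ 1 := fun x =>
    Real.exp_le_one_iff.2 (neg_nonpos.2 (mul_nonneg hN (le_max_left _ _)))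
  have hint : Integrable (fun x => Real.exp (-(N * max 0 (x - r)))) μ :=
    .of_bound (Continuous.aestronglyMeasurable (by fun_prop)) 1 (.of_forall fun x => by
      simpa using hle_one x)
  calc μ.real (Iic r) ≤ μ.real {x | 1 ≤ Real.exp (-(N * max 0 (x - r)))} := by
        refine measureReal_mono fun x hx => ?_
        simp [max_eq_left (sub_nonpos.2 (mem_Iic.1 hx))]
    _ ≤ _ := by
        simpa using mul_meas_ge_le_integral_of_nonneg
          (.of_forall fun x => (Real.exp_pos _).le) hint 1

end TestFunction

namespace IsLogLipschitzIFS

variable {g : ℕ → ℝ → ℝ} {b : ℕ → ℝ} {c α : ℝ} (hg : IsLogLipschitzIFS g b c α)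

include hg

section FixedLevel

variable {C h M r : ℝ} {j n : ℕ}

lemma integral_limitMeasure_le_mul_integral {σ η : ℝ} (hσ₀ : 0 ≤ σ) (hσ₁ : σ < 1) (hC : 0 ≤ C)
    (hσ : C * α + c ≤ (1 - σ) * C) (hh₀ : 0 ≤ h) (hh₁ : h ≤ 1) (hn : 1 ≤ n)
    (hη : (n : ℝ) ^ (1 - h) * (h + (1 - h) * Real.exp C) ≤ 1 + η)
    (hηθ : η < σ * (Real.exp (-(C + c)) * |deriv (g 1) 0|)) {ψ : ℝ → ℝ}
    (hψ : LogLipschitzOn C ψ (Icc 0 1)) :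
    ∫ x, ψ x ∂(limitMeasure g h n) ≤
      σ * (Real.exp (-(C + c)) * |deriv (g 1) 0|) /
        (σ * (Real.exp (-(C + c)) * |deriv (g 1) 0|) - η) * ∫ x in Icc 0 1, ψ x := by
  refine integral_le_mul_integral_of_cone_contraction (L := transferOp g (Finset.Ioc 0 n) h)
    isCompact_Icc hg.ae_limitMeasure_mem_Icc ae_restrict_Icc_zero_one_mem hC hσ₀ hσ₁
    (by positivity) (fun φ hφ => ?_) (fun φ hφ x hx => ?_) (fun φ hφ => ?_) (fun φ hφ => ?_) hηθ hψ
  · exact (hg.logLipschitzOn_transferOp hC hh₀ hh₁ hφ hn).mono hσ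
  · rw [mul_assoc]
    exact mul_le_mul_of_nonneg_left (hg.mul_integral_le_transferOp hC hh₁ hφ hn hx) hσ₀
  · exact (hg.integral_transferOp_le_mul_integral hC hh₀ hh₁ hφ hn).trans <|
      mul_le_mul_of_nonneg_right hη
        (hφ.integral_pos hC isCompact_Icc ae_restrict_Icc_zero_one_mem).le
  · exact hg.integral_limitMeasure_le_integral_transferOp hC hh₀ hh₁ hφ

lemma inter_limitSet_subset_iUnion_image (hr : r < b j) :
    Icc 0 r ∩ limitSet g n ⊆ ⋃ k ∈ Finset.Ioc j n, g k '' limitSet g n := by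
  rintro x ⟨⟨-, hxr⟩, hx⟩
  obtain ⟨k, hk, hxk⟩ := mem_iUnion₂.1 (hg.limitSet_subset_iUnion n hx)
  obtain ⟨hk₁, hkn⟩ := Finset.mem_Ioc.1 hk
  have hbk : b k ≤ x := (hg.image_eq k hk₁ ▸ image_mono (hg.limitSet_subset n) hxk).1
  have hjk : j < k := hg.strictAnti_b.lt_iff_gt.1 ((hbk.trans hxr).trans_lt hr)
  exact mem_iUnion₂.2 ⟨k, Finset.mem_Ioc.2 ⟨hjk, hkn⟩, hxk⟩

lemma limitMeasure_Icc_le_mul_rpow (hh₀ : 0 ≤ h) (hh₁ : h ≤ 1) (hM₀ : 0 ≤ M)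
    (hM : ∀ φ, LogLipschitzOn c φ (Icc 0 1) →
      ∫ x, φ x ∂(limitMeasure g h n) ≤ M * ∫ x in Icc 0 1, φ x) (hr : r < b j) :
    limitMeasure g h n (Icc 0 r) ≤ ENNReal.ofReal (M * ((n : ℝ) ^ (1 - h) * b j ^ h)) := by
  set m := limitMeasure g h n
  have hsubset := hg.inter_limitSet_subset_iUnion_image (n := n) hr
  have hae : m (Icc 0 r) = m (Icc 0 r ∩ limitSet g n) :=
    (measure_inter_conull hg.ae_limitMeasure_mem_limitSet).symm
  rcases le_or_gt n j with hnj | hjn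
  · rw [Finset.Ioc_eq_empty_of_le hnj] at hsubset
    simp [hae, subset_empty_iff.1 (hsubset.trans (by simp))]
  have hcone : LogLipschitzOn c (transferOp g (Finset.Ioc j n) h fun _ => 1) (Icc 0 1) := by
    simpa using hg.logLipschitzOn_transferOp le_rfl hh₀ hh₁ (.one le_rfl) hjn
  calc m (Icc 0 r) = ∫⁻ _ in Icc 0 r ∩ limitSet g n, ENNReal.ofReal 1 ∂m := by simp [hae]
    _ ≤ ENNReal.ofReal (∫ x, transferOp g (Finset.Ioc j n) h (fun _ => 1) x ∂m) :=
        hg.setLIntegral_limitMeasure_le_integral_transferOp le_rfl hh₀ hh₁ (.one le_rfl) hsubset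
    _ ≤ ENNReal.ofReal (M * ((n : ℝ) ^ (1 - h) * b j ^ h)) := by
        refine ENNReal.ofReal_le_ofReal ((hM _ hcone).trans ?_)
        gcongr
        exact hg.integral_transferOp_one_le hh₀ hh₁ (Nat.one_le_of_lt hjn) hjn.le

lemma exists_b_succ_le_lt {k : ℕ} (hr₀ : 0 < r) (hr : r < b k) :
    ∃ j ≥ k, b (j + 1) ≤ r ∧ r < b j := by
  have hex : ∃ j, b (j + 1) ≤ r :=
    (((tendsto_add_atTop_iff_nat 1).2 hg.tendsto_b).eventually_le_const hr₀).exists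
  classical
  have hlt : r < b (Nat.find hex) := by
    rcases hj : Nat.find hex with _ | i
    · exact hr.trans_le (hg.b_le_b k.zero_le)
    · exact not_le.1 (Nat.find_min hex (hj ▸ i.lt_succ_self))
  refine ⟨Nat.find hex, ?_, Nat.find_spec hex, hlt⟩
  exact Nat.lt_succ_iff.1 (hg.strictAnti_b.lt_iff_gt.1 ((Nat.find_spec hex).trans_lt hr))

end FixedLevel

section Asymptotics

variable {h : ℕ → ℝ} {ε : ℝ} (hε : 0 < ε) (hh₁ : ∀ᶠ n in atTop, h n ≤ 1)
  (hN1 : Tendsto (fun n : ℕ => (1 - h n) * Real.log n) atTop (𝓝 0))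

include hε hh₁ hN1

theorem eventually_integral_limitMeasure_le (C : ℝ) :
    ∀ᶠ n in atTop, ∀ ψ, LogLipschitzOn C ψ (Icc 0 1) →
      ∫ x, ψ x ∂(limitMeasure g (h n) n) ≤ (1 + ε) * ∫ x in Icc 0 1, ψ x := by
  set σ := (1 - α) / 2 with hσ_def
  have hσ₀ : 0 < σ := half_pos (sub_pos.2 hg.alpha_lt_one)
  have hσ₁ : σ < 1 := by linarith [hg.alpha_pos]
  set D := max C (c / σ)
  have hD₀ : 0 ≤ D := (div_nonneg hg.c_nonneg hσ₀.le).trans (le_max_right _ _)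
  have hD : D * α + c ≤ (1 - σ) * D := by
    have hcD : c ≤ D * σ := (div_le_iff₀ hσ₀).1 (le_max_right C (c / σ))
    have hα : α = 1 - 2 * σ := by rw [hσ_def]; ring
    rw [hα]
    linarith
  set θ := σ * (Real.exp (-(D + c)) * |deriv (g 1) 0|)
  have hθ : 0 < θ := by
    have := hg.abs_deriv_pos le_rfl (left_mem_Icc.2 zero_le_one)
    positivity
  -- `η` is chosen so that `θ / (θ - η) = 1 + ε`.
  set η := θ * ε / (1 + ε) with hη_def
  have hη₀ : 0 < η := by positivity
  have hθη : θ - η = θ / (1 + ε) := by rw [hη_def]; field_simp; ring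
  have hh := tendsto_one_of_tendsto_one_sub_mul_log hN1
  have hupper : Tendsto (fun n : ℕ => (n : ℝ) ^ (1 - h n) * (h n + (1 - h n) * Real.exp D))
      atTop (𝓝 1) := by
    simpa using (tendsto_natCast_rpow_one_sub hN1).mul
      (hh.add ((hh.const_sub 1).mul_const (Real.exp D)))
  filter_upwards [hh₁, hh.eventually_const_le one_pos, eventually_ge_atTop 1,
    hupper.eventually_le_const (lt_add_of_pos_right 1 hη₀)] with n hn₁ hn₀ hn hnη ψ hψ
  have hηθ : η < θ := sub_pos.1 (hθη ▸ by positivity)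
  have hbound := hg.integral_limitMeasure_le_mul_integral hσ₀.le hσ₁ hD₀ hD hn₀ hn₁ hn hnη hηθ
    (hψ.mono (le_max_left _ _))
  rwa [hθη, div_div_cancel₀ hθ.ne'] at hbound

lemma eventually_limitMeasure_Icc_le_of_ge {a : ℝ} (ha : 0 < a) :
    ∀ᶠ n in atTop, ∀ r, a ≤ r → r ≤ 1 →
      limitMeasure g (h n) n (Icc 0 r) ≤ ENNReal.ofReal ((1 + ε) ^ 2 * r) := by
  set N := 1 / (a * ε) with hN_def
  have hN : 0 < N := by positivity
  filter_upwards [hg.eventually_integral_limitMeasure_le hε hh₁ hN1 N] with n hn r har hr₁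
  set m := limitMeasure g (h n) n
  have htest : 1 / N ≤ r * ε := by
    rw [hN_def, one_div_one_div]
    gcongr
  rw [← ofReal_measureReal]
  refine ENNReal.ofReal_le_ofReal ?_
  calc m.real (Icc 0 r) ≤ m.real (Iic r) := measureReal_mono Icc_subset_Iic_self
    _ ≤ ∫ x, Real.exp (-(N * max 0 (x - r))) ∂m :=
        measureReal_Iic_le_integral_exp_neg_mul_max hN.le
    _ ≤ (1 + ε) * ∫ x in Icc 0 1, Real.exp (-(N * max 0 (x - r))) :=
        hn _ (logLipschitzOn_exp_neg_mul_max hN.le r _)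
    _ ≤ (1 + ε) * (r + 1 / N) := by
        gcongr
        exact integral_exp_neg_mul_max_le hN (ha.le.trans har) hr₁
    _ ≤ (1 + ε) * (r + r * ε) := by gcongr
    _ = (1 + ε) ^ 2 * r := by ring

lemma eventually_limitMeasure_Icc_le_of_lt {k₀ : ℕ} (hb : ∀ k ≥ k₀, b k ≤ (1 + ε) * b (k + 1)) :
    ∀ᶠ n in atTop, ∀ r, 0 < r → r < b k₀ →
      limitMeasure g (h n) n (Icc 0 r) ≤ ENNReal.ofReal ((1 + ε) ^ 3 * r ^ h n) := by
  have hh := tendsto_one_of_tendsto_one_sub_mul_log hN1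
  filter_upwards [hh₁, hh.eventually_const_le one_pos,
    hg.eventually_integral_limitMeasure_le hε hh₁ hN1 c,
    (tendsto_natCast_rpow_one_sub hN1).eventually_le_const (lt_add_of_pos_right 1 hε)]
    with n hn₁ hn₀ hn hpow r hr₀ hr
  obtain ⟨j, hj, hbr, hrb⟩ := hg.exists_b_succ_le_lt hr₀ hr
  refine (hg.limitMeasure_Icc_le_mul_rpow hn₀ hn₁ (by positivity) hn hrb).trans
    (ENNReal.ofReal_le_ofReal ?_)
  have hbj : b j ^ h n ≤ (1 + ε) * r ^ h n := by
    calc b j ^ h n ≤ ((1 + ε) * r) ^ h n := by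
          have hbj₀ := (hg.b_pos j).le
          gcongr
          exact (hb j hj).trans (by gcongr)
      _ = (1 + ε) ^ h n * r ^ h n := Real.mul_rpow (by positivity) hr₀.le
      _ ≤ (1 + ε) * r ^ h n := by
          gcongr
          exact Real.rpow_le_self_of_one_le (by linarith) hn₁
  calc (1 + ε) * ((n : ℝ) ^ (1 - h n) * b j ^ h n)
      ≤ (1 + ε) * ((1 + ε) * ((1 + ε) * r ^ h n)) := by
        have := (Real.rpow_nonneg (hg.b_pos j).le (h n))
        gcongr
    _ = (1 + ε) ^ 3 * r ^ h n := by ring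

theorem eventually_limitMeasure_Icc_le (hb : Tendsto (fun k => b k / b (k + 1)) atTop (𝓝 1)) :
    ∀ᶠ n in atTop, ∀ r, 0 < r → r ≤ 1 →
      limitMeasure g (h n) n (Icc 0 r) ≤ ENNReal.ofReal ((1 + ε) * r ^ h n) := by
  obtain ⟨δ, hδε, hδ⟩ : ∃ δ : ℝ, (1 + δ) ^ 3 ≤ 1 + ε ∧ 0 < δ := by
    have hcube : Tendsto (fun δ : ℝ => (1 + δ) ^ 3) (𝓝[>] 0) (𝓝 1) := by
      have hcont : Continuous fun δ : ℝ => (1 + δ) ^ 3 := by fun_prop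
      simpa using (hcont.tendsto 0).mono_left nhdsWithin_le_nhds
    exact ((hcube.eventually_le_const (lt_add_of_pos_right 1 hε)).and
      self_mem_nhdsWithin).exists
  obtain ⟨k₀, hk₀⟩ : ∃ k₀, ∀ k ≥ k₀, b k ≤ (1 + δ) * b (k + 1) := by
    refine eventually_atTop.1 ((hb.eventually_le_const (lt_add_of_pos_right 1 hδ)).mono ?_)
    exact fun k hk => (div_le_iff₀ (hg.b_pos (k + 1))).1 hk
  filter_upwards [hh₁, hg.eventually_limitMeasure_Icc_le_of_ge hδ hh₁ hN1 (hg.b_pos k₀),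
    hg.eventually_limitMeasure_Icc_le_of_lt hδ hh₁ hN1 hk₀] with n hn₁ hlarge hsmall r hr₀ hr₁
  rcases le_or_gt (b k₀) r with hr | hr
  · refine (hlarge r hr hr₁).trans (ENNReal.ofReal_le_ofReal (mul_le_mul ?_ ?_ hr₀.le ?_))
    · exact (pow_le_pow_right₀ (by linarith) (by norm_num)).trans hδε
    · exact Real.self_le_rpow_of_le_one hr₀.le hr₁ hn₁
    · positivity
  · refine (hsmall r hr₀ hr).trans (ENNReal.ofReal_le_ofReal ?_)
    gcongr

end Asymptotics

end IsLogLipschitzIFS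

lemma le_one_of_dimH_eq_ofReal {s : Set ℝ} {d : ℝ} (hs : dimH s = ENNReal.ofReal d) : d ≤ 1 := by
  rw [← ENNReal.ofReal_le_one, ← hs, ← Real.dimH_univ]
  exact dimH_mono (subset_univ s)

theorem nonlinear_density_zero_all_r_general {g : ℕ → ℝ → ℝ} {b : ℕ → ℝ} {c α : ℝ} {h : ℕ → ℝ}
    (hg : IsLogLipschitzIFS g b c α)
    (hdim : ∀ n, 1 ≤ n → dimH (limitSet g n) = ENNReal.ofReal (h n))
    (hN1 : Tendsto (fun n : ℕ => (1 - h n) * Real.log n) atTop (𝓝 0))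
    (hb : Tendsto (fun k => b k / b (k + 1)) atTop (𝓝 1)) {ε : ℝ} (hε : 0 < ε) :
    ∃ n₀ : ℕ, ∀ n > n₀, ∀ r : ℝ, 0 < r → r ≤ 1 →
      μH[h n] (Icc 0 r ∩ limitSet g n) / μH[h n] (limitSet g n) / ENNReal.ofReal (r ^ h n) ≤
        ENNReal.ofReal (1 + ε) := by
  have hh₁ : ∀ᶠ n in atTop, h n ≤ 1 :=
    (eventually_ge_atTop 1).mono fun n hn => le_one_of_dimH_eq_ofReal (hdim n hn)
  obtain ⟨n₀, hn₀⟩ := eventually_atTop.1 (hg.eventually_limitMeasure_Icc_le hε hh₁ hN1 hb)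
  refine ⟨n₀, fun n hn r hr₀ hr₁ => ?_⟩
  rw [← hg.limitMeasure_apply]
  refine ENNReal.div_le_of_le_mul ?_
  rw [← ENNReal.ofReal_mul (by positivity)]
  exact hn₀ n hn.le r hr₀ hr₁

lemma tendsto_of_tendsto_iSup_Ici {u : ℕ → ℝ} {a : ℝ} (ha : 0 < a) (hu : ∀ k, a ≤ u k)
    (hlim : Tendsto (fun n => ⨆ k ∈ Ici n, u k) atTop (𝓝 a)) : Tendsto u atTop (𝓝 a) := by
  refine tendsto_of_tendsto_of_tendsto_of_le_of_le' tendsto_const_nhds hlim (.of_forall hu) ?_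
  filter_upwards [hlim.eventually_const_lt ha] with n hn
  -- An unbounded real supremum has the junk value `0`.
  have hbdd : BddAbove (range fun k => ⨆ _ : k ∈ Ici n, u k) := by
    by_contra hunbdd
    exact hn.ne' (Real.iSup_of_not_bddAbove hunbdd)
  simpa using le_ciSup hbdd n

namespace NonlinearIFS

variable (S : NonlinearIFS)

lemma deriv_g {k : ℕ} (hk : 1 ≤ k) {x : ℝ} (hx : x ∈ Icc (0 : ℝ) 1) :
    deriv (S.g k) x = S.g' k x := (S.deriv1 k hk x hx).deriv

lemma logLipschitzOn_abs_deriv {c : ℝ} {k : ℕ} (hk : 1 ≤ k)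
    (hc : ∀ x ∈ Icc (0 : ℝ) 1, |S.g'' k x / S.g' k x| ≤ c) :
    LogLipschitzOn c (fun x => |deriv (S.g k) x|) (Icc 0 1) := by
  have hexp_log : EqOn (fun x => |deriv (S.g k) x|)
      (fun x => Real.exp (Real.log (S.g' k x))) (Icc 0 1) := fun x hx => by
    simp only [S.deriv_g hk hx, Real.exp_log_eq_abs (S.deriv_ne k hk x hx)]
  refine LogLipschitzOn.congr (.exp_of_lipschitzOn fun x hx y hy => ?_) hexp_log
  exact (le_abs_self _).trans <|
    (convex_Icc (0 : ℝ) 1).norm_image_sub_le_of_norm_hasDerivWithin_le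
      (fun z hz => ((S.deriv2 k hk z hz).log (S.deriv_ne k hk z hz)).hasDerivWithinAt) hc hy hx

lemma exists_isLogLipschitzIFS : ∃ c α, IsLogLipschitzIFS S.g S.b c α := by
  obtain ⟨c, hc₀, hc⟩ := S.N3
  obtain ⟨α, hα₁, hα⟩ := S.N5
  exact ⟨c, α,
    { b_zero := S.b_zero
      strictAnti_b := S.b_anti
      tendsto_b := S.b_lim
      image_eq := S.g_image
      injOn := fun k hk => (S.g_anti k hk).injOn
      differentiableAt := fun k hk x hx => (S.deriv1 k hk x hx).differentiableAt
      logLipschitzOn_deriv := fun k hk =>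
        S.logLipschitzOn_abs_deriv hk fun x hx => (hc k hk x hx).le
      abs_deriv_le := fun k hk x hx => S.deriv_g hk hx ▸ (hα k hk x hx).le
      c_nonneg := hc₀.le
      alpha_lt_one := hα₁ }⟩

lemma tendsto_b_div_b_succ : Tendsto (fun k => S.b k / S.b (k + 1)) atTop (𝓝 1) := by
  obtain ⟨c, α, hg⟩ := S.exists_isLogLipschitzIFS
  exact tendsto_of_tendsto_iSup_Ici one_pos
    (fun k => (one_le_div (hg.b_pos (k + 1))).2 (hg.b_le_b k.le_succ)) S.N2

end NonlinearIFS

/-- In the nonlinear setting, for every `ε > 0` there is `n₀` such that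
    `m_n([0,r])/r^{h_n} ≤ 1 + ε` for all `n > n₀` and all `r ∈ (0, 1]`. -/
theorem nonlinear_density_zero_all_r (S : NonlinearIFS) :
    ∀ ε > (0 : ℝ), ∃ n₀ : ℕ, ∀ n > n₀, ∀ r : ℝ, 0 < r → r ≤ 1 →
      normMeas S n (Set.Icc 0 r) / ENNReal.ofReal (r ^ S.h n) ≤ ENNReal.ofReal (1 + ε) := by
  obtain ⟨c, α, hg⟩ := S.exists_isLogLipschitzIFS
  exact fun ε hε =>
    nonlinear_density_zero_all_r_general hg S.h_dim S.N1 S.tendsto_b_div_b_succ hε
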